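/- arXiv:2007.11054 — 3 statements merged into one kernel-verified Lean document; each statement's English description precedes it below -/
import Mathlib

section
/- For every m ∈ ℕ^n and every integer k ≥ 1, S_D(k·m) equals the k-fold Minkowski sum of S_D(m) with itself: every element of S_D(k·m) can be written as x_1 + ⋯ + x_k with all x_t ∈ S_D(m), and conversely every such sum lies in S_D(k·m). (This expresses the normality of the polytope P_w(λ), part (1) of the paper's Main Theorem, in type D.) -/
open Finset
open scoped Pointwise

/-- The quantity `Q_d(m) = (m_1 + ⋯ + m_{d-1}) + 2(m_d + ⋯ + m_{n-2}) + m_{n-1} + m_n`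
appearing in the type-`D` inequalities. -/
def QD (n : ℕ) (m : ℕ → ℕ) (d : ℕ) : ℕ :=
  (∑ l ∈ Icc 1 (d - 1), m l) + 2 * (∑ l ∈ Icc d (n - 2), m l) + m (n - 1) + m n

/-- The lattice-point set `S_D(m)` of the polytope `P_w(λ)` in type `D_n`, where
`w = s_1 ⋯ s_{n-1} s_n s_{n-2} ⋯ s_1` and `λ = m_1 ω_1 + ⋯ + m_n ω_n`.
A point is a triple `(a, b, d)` where `a` is the 1-based tuple `a_1, …, a_{n-1}`,
`b ∈ ℕ` and `d` is the 1-based tuple `d_2, …, d_{n-1}` (all other coordinates vanish),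
subject to the Dyck-path inequalities (D1)–(D4), the degree-path inequalities (D5)–(D6)
and the inequalities (D7) from paths with coefficients. -/
def SD (n : ℕ) (m : ℕ → ℕ) : Set ((ℕ → ℕ) × ℕ × (ℕ → ℕ)) :=
  {x | (∀ l, (l = 0 ∨ n - 1 < l) → x.1 l = 0) ∧
    (∀ l, (l ≤ 1 ∨ n - 1 < l) → x.2.2 l = 0) ∧
    (∀ j, 1 ≤ j → j ≤ n - 1 →
      ∑ l ∈ Icc 1 j, x.1 l ≤ ∑ l ∈ Icc 1 j, m l) ∧
    ((∑ l ∈ Icc 1 (n - 2), x.1 l) + x.2.1 ≤ (∑ l ∈ Icc 1 (n - 2), m l) + m n) ∧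
    ((∑ l ∈ Icc 1 (n - 1), x.1 l) + x.2.2 (n - 1) ≤ ∑ l ∈ Icc 1 n, m l) ∧
    ((∑ l ∈ Icc 1 (n - 2), x.1 l) + x.2.1 + x.2.2 (n - 1) ≤ ∑ l ∈ Icc 1 n, m l) ∧
    (∀ d, 2 ≤ d → d ≤ n - 2 →
      (∑ l ∈ Icc 1 (n - 1), x.1 l) + ∑ l ∈ Icc d (n - 1), x.2.2 l ≤ QD n m d) ∧
    (∀ d, 2 ≤ d → d ≤ n - 2 →
      (∑ l ∈ Icc 1 (n - 2), x.1 l) + x.2.1 + ∑ l ∈ Icc d (n - 1), x.2.2 l ≤ QD n m d) ∧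
    (∀ d k, 2 ≤ d → d ≤ n - 1 → d - 1 ≤ k → k ≤ n - 2 →
      2 * (∑ l ∈ Icc 1 k, x.1 l) + (∑ l ∈ Icc (k + 1) (n - 1), x.1 l) + x.2.1 +
          ∑ l ∈ Icc d (n - 1), x.2.2 l ≤
        QD n m d + ∑ l ∈ Icc 1 k, m l)}

/-!
Write `r = n - 2`, `c = a_{n-1}` and let `E_j = (m_1 + ⋯ + m_j) - (a_1 + ⋯ + a_j)` be the slack of
(D1). The inequalities (D3)–(D7) whose tail of `d` starts at `j` then collapse to the single bound
`b + c + (d_j + ⋯ + d_{n-1}) ≤ E_r + (m_j + ⋯ + m_n) + min (b, c, E_{j-1}, …, E_r)`.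

To cut a point of `S_D(k·m)` into `k` points of `S_D(m)`, replace `E`, `b` and `c` by the roundings
`⌊(e + t) / k⌋` for `t < k`. Each rounding is monotone, hence commutes with the minimum; it turns
the addition of `k p` into the addition of `p`; and the `k` roundings of `e` add up to `e` by
Hermite's identity. So the bounds on the tails of `d` for the `k` pieces add up exactly to the
original one, and as these bounds decrease with `j`, the coordinates of `d` can be distributed
greedily among the pieces.
-/

section Sums

lemma sum_Icc_add_sum_Icc_add_one {M : Type*} [AddCommMonoid M] (f : ℕ → M) {s i t : ℕ}
    (hs : s ≤ i + 1) (ht : i ≤ t) :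
    ∑ l ∈ Icc s i, f l + ∑ l ∈ Icc (i + 1) t, f l = ∑ l ∈ Icc s t, f l := by
  simpa only [Ico_add_one_right_eq_Icc] using
    sum_Ico_consecutive f hs (Nat.add_le_add_right ht 1)

lemma add_sum_Icc_add_one {M : Type*} [AddCommMonoid M] (f : ℕ → M) {s t : ℕ} (h : s ≤ t) :
    f s + ∑ l ∈ Icc (s + 1) t, f l = ∑ l ∈ Icc s t, f l := by
  rw [Icc_add_one_left_eq_Ioc, add_sum_Ioc_eq_sum_Icc h]

lemma exists_sum_eq_forall_add_le {ι : Type*} [Fintype ι] {load cap : ι → ℕ} {d : ℕ}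
    (hle : ∀ i, load i ≤ cap i) (hd : ∑ i, load i + d ≤ ∑ i, cap i) :
    ∃ x : ι → ℕ, ∑ i, x i = d ∧ ∀ i, load i + x i ≤ cap i := by
  have hroom : d ≤ (Finsupp.equivFunOnFinite.symm (cap - load)).degree := by
    have hsum : ∑ i, (cap i - load i) + ∑ i, load i = ∑ i, cap i := by
      rw [← sum_add_distrib]
      exact sum_congr rfl fun i _ => Nat.sub_add_cancel (hle i)
    simp only [Finsupp.degree_eq_sum, Finsupp.equivFunOnFinite_symm_apply_apply, Pi.sub_apply]
    omega
  obtain ⟨x, hx, hxd⟩ := Finsupp.exists_le_degree_eq _ d hroom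
  refine ⟨x, by rw [← hxd, Finsupp.degree_eq_sum], fun i => ?_⟩
  have hxi : x i ≤ cap i - load i := hx i
  have := hle i
  omega

lemma exists_sum_eq_forall_add_tail_le {ι : Type*} [Fintype ι] {d : ℕ → ℕ} {x : ι → ℕ → ℕ}
    {load cap : ι → ℕ} {s t : ℕ} (hst : s ≤ t) (hxd : ∀ l ∈ Icc (s + 1) t, ∑ i, x i l = d l)
    (hx : ∀ i, load i + ∑ l ∈ Icc (s + 1) t, x i l ≤ cap i)
    (hd : ∑ i, load i + ∑ l ∈ Icc s t, d l ≤ ∑ i, cap i) :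
    ∃ v : ι → ℕ, ∑ i, v i = d s ∧ ∀ i, load i + (v i + ∑ l ∈ Icc (s + 1) t, x i l) ≤ cap i := by
  have hroom : ∑ i, (load i + ∑ l ∈ Icc (s + 1) t, x i l) + d s ≤ ∑ i, cap i := by
    rwa [sum_add_distrib, sum_comm, sum_congr rfl hxd, add_assoc, add_comm _ (d s),
      add_sum_Icc_add_one d hst]
  obtain ⟨v, hvd, hv⟩ := exists_sum_eq_forall_add_le hx hroom
  exact ⟨v, hvd, fun i => by linarith [hv i]⟩

-- Greedy filling from the last coordinate down: since the capacities only grow on the way down,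
-- the room used up so far never obstructs a later step.
lemma exists_sum_eq_forall_tail_le {ι : Type*} [Fintype ι] (d : ℕ → ℕ) {load : ι → ℕ}
    {cap : ι → ℕ → ℕ} {s t : ℕ} (hs : s ≤ t + 1)
    (hanti : ∀ i, AntitoneOn (cap i) (Set.Icc s t))
    (hload : ∀ i, ∀ j ∈ Icc s t, load i ≤ cap i j)
    (hd : ∀ j ∈ Icc s t, ∑ i, load i + ∑ l ∈ Icc j t, d l ≤ ∑ i, cap i j) :
    ∃ x : ι → ℕ → ℕ, (∀ l ∈ Icc s t, ∑ i, x i l = d l) ∧ (∀ i, ∀ l ∉ Icc s t, x i l = 0) ∧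
      ∀ i, ∀ j ∈ Icc s t, load i + ∑ l ∈ Icc j t, x i l ≤ cap i j := by
  induction hs using Nat.decreasingInduction with
  | self => exact ⟨0, by simp, by simp, by simp⟩
  | of_succ s hst ih =>
    have hst : s ≤ t := Nat.lt_succ_iff.1 hst
    have hsub : Icc (s + 1) t ⊆ Icc s t := Icc_subset_Icc_left s.le_succ
    obtain ⟨x, hxd, hx0, hx⟩ := ih
      (fun i => (hanti i).mono (Set.Icc_subset_Icc_left s.le_succ))
      (fun i j hj => hload i j (hsub hj)) (fun j hj => hd j (hsub hj))
    have hxs : ∀ i, load i + ∑ l ∈ Icc (s + 1) t, x i l ≤ cap i s := by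
      intro i
      rcases hst.eq_or_lt with rfl | hlt
      · simpa using hload i s (by simp)
      · exact (hx i (s + 1) (mem_Icc.2 ⟨le_rfl, hlt⟩)).trans
          (hanti i ⟨le_rfl, hst⟩ ⟨s.le_succ, hlt⟩ s.le_succ)
    obtain ⟨v, hvd, hv⟩ :=
      exists_sum_eq_forall_add_tail_le hst hxd hxs (hd s (left_mem_Icc.2 hst))
    refine ⟨fun i => Function.update (x i) s (v i), fun l hl => ?_, fun i l hl => ?_,
      fun i j hj => ?_⟩
    · rcases eq_or_ne l s with rfl | hls
      · simpa using hvd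
      · simpa [hls] using hxd l (by simp only [mem_Icc] at hl ⊢; omega)
    · have hls : l ≠ s := by rintro rfl; exact hl (left_mem_Icc.2 hst)
      simpa [hls] using hx0 i l fun h => hl (hsub h)
    · rcases (mem_Icc.1 hj).1.eq_or_lt with rfl | hlt
      · simpa only [← add_sum_Icc_add_one _ hst, Function.update_self,
          sum_update_of_notMem (show s ∉ Icc (s + 1) t by simp)] using hv i
      · simp only [sum_update_of_notMem (show s ∉ Icc j t by simp [hlt])]
        exact hx i j (mem_Icc.2 ⟨hlt, (mem_Icc.1 hj).2⟩)

end Sums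

section Share

/-- The `t`-th of the `k` nearly equal parts `⌊(e + t) / k⌋`, `t < k`, of the number `e`. -/
def share (k t e : ℕ) : ℕ := (e + t) / k

lemma share_mono (k t : ℕ) : Monotone (share k t) :=
  fun _ _ h => Nat.div_le_div_right (Nat.add_le_add_right h t)

lemma share_zero {k t : ℕ} (ht : t < k) : share k t 0 = 0 := by
  rw [share, zero_add, Nat.div_eq_of_lt ht]

lemma share_add_mul {k : ℕ} (hk : 0 < k) (t e p : ℕ) : share k t (e + k * p) = share k t e + p := by
  rw [share, add_right_comm, Nat.add_mul_div_left _ _ hk, share]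

lemma share_le_share_add {k e e' p : ℕ} (hk : 0 < k) (t : ℕ) (h : e ≤ e' + k * p) :
    share k t e ≤ share k t e' + p :=
  share_add_mul hk t e' p ▸ share_mono k t h

lemma sum_share {k : ℕ} (hk : 0 < k) (e : ℕ) : ∑ t : Fin k, share k t e = e := by
  rw [Fin.sum_univ_eq_sum_range (share k · e)]
  induction e with
  | zero => exact sum_eq_zero fun t ht => share_zero (mem_range.1 ht)
  | succ e ih =>
    have hshift : ∀ t, share k t (e + 1) = share k (t + 1) e := fun t => by
      rw [share, share, add_assoc, add_comm 1]
    have hlast : share k k e = share k 0 e + 1 := Nat.add_div_right e hk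
    have hends := (sum_range_succ (share k · e) k).symm.trans (sum_range_succ' (share k · e) k)
    simp only [hshift]
    omega

end Share

section CrossMin

/-- The minimum of `b`, `c` and `E i, …, E r`, so that `b + c - crossMin r E b c i` is the largest
of `b`, `c` and the differences `b + c - E k`, which are what (D5)–(D7) add to a tail of `d`. The
base value `min b c` of the fold covers the case of an empty range `i > r`. -/
def crossMin (r : ℕ) (E : ℕ → ℕ) (b c i : ℕ) : ℕ := (Icc i r).fold min (min b c) E

lemma le_add_crossMin_iff {r b c i x y : ℕ} {E : ℕ → ℕ} :
    y ≤ x + crossMin r E b c i ↔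
      y ≤ x + b ∧ y ≤ x + c ∧ ∀ k, i ≤ k → k ≤ r → y ≤ x + E k := by
  simp only [crossMin, ← tsub_le_iff_left, le_fold_min, le_min_iff, mem_Icc, and_imp, and_assoc]

lemma map_crossMin {f : ℕ → ℕ} (hf : Monotone f) (r : ℕ) (E : ℕ → ℕ) (b c i : ℕ) :
    crossMin r (fun j => f (E j)) (f b) (f c) i = f (crossMin r E b c i) := by
  rw [crossMin, ← hf.map_min, fold_hom fun _ _ => hf.map_min, crossMin]

lemma crossMin_le_add {r b c i p : ℕ} {E : ℕ → ℕ} (hi : i < r) (hE : E (i + 1) ≤ E i + p) :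
    crossMin r E b c (i + 1) ≤ p + crossMin r E b c i := by
  have hmin : crossMin r E b c (i + 1) ≤ 0 + crossMin r E b c (i + 1) := (zero_add _).ge
  obtain ⟨hb, hc, hk⟩ := le_add_crossMin_iff.1 hmin
  refine le_add_crossMin_iff.2 ⟨by omega, by omega, fun k hik hkr => ?_⟩
  rcases hik.eq_or_lt with rfl | hlt
  · have := hk (i + 1) le_rfl hi
    omega
  · have := hk k hlt hkr
    omega

end CrossMin

section TailBound

variable {r : ℕ} {m E : ℕ → ℕ} {b c : ℕ}

/-- The bound on `b + c + (d_j + ⋯ + d_{r+1})` that summarizes the inequalities of `SD (r + 2) m`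
involving `d`, where `c = a_{r+1}` and `E` is the slack function of `IsSlack`. The shift `j - 1`
comes from the range `d - 1 ≤ k` in (D7). -/
def tailBound (r : ℕ) (m E : ℕ → ℕ) (b c j : ℕ) : ℕ :=
  E r + ∑ l ∈ Icc j (r + 2), m l + crossMin r E b c (j - 1)

lemma antitoneOn_tailBound (hE : ∀ j < r, E (j + 1) ≤ E j + m (j + 1)) :
    AntitoneOn (tailBound r m E b c) (Set.Icc 2 (r + 1)) := by
  refine antitoneOn_of_add_one_le Set.ordConnected_Icc fun j _ hj hj' => ?_
  obtain ⟨i, rfl⟩ : ∃ i, j = i + 1 := Nat.exists_eq_add_of_le' (one_le_two.trans hj.1)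
  have hi : i < r := by simpa using hj'.2
  have hsum := add_sum_Icc_add_one m (show i + 1 ≤ r + 2 by omega)
  have hmin := crossMin_le_add (b := b) (c := c) hi (hE i hi)
  simp only [tailBound, Nat.add_sub_cancel]
  omega

lemma add_le_tailBound (hE : ∀ j < r, E (j + 1) ≤ E j + m (j + 1))
    (hc : c ≤ E r + m (r + 1)) (hb : b ≤ E r + m (r + 2)) {j : ℕ} (hj : j ∈ Icc 2 (r + 1)) :
    b + c ≤ tailBound r m E b c j := by
  obtain ⟨hj2, hjr⟩ := mem_Icc.1 hj
  have hlast : b + c ≤ tailBound r m E b c (r + 1) := by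
    have hsum : ∑ l ∈ Icc (r + 1) (r + 2), m l = m (r + 1) + m (r + 2) := by
      simp [sum_Icc_succ_top]
    rw [tailBound, hsum, le_add_crossMin_iff]
    refine ⟨by omega, by omega, fun k hk hkr => ?_⟩
    obtain rfl : k = r := le_antisymm hkr hk
    omega
  exact hlast.trans
    (antitoneOn_tailBound hE ⟨hj2, hjr⟩ ⟨hj2.trans hjr, le_rfl⟩ hjr)

lemma sum_tailBound_share {k : ℕ} (hk : 0 < k) (r : ℕ) (m E : ℕ → ℕ) (b c j : ℕ) :
    ∑ t : Fin k, tailBound r m (fun i => share k t (E i)) (share k t b) (share k t c) j =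
      tailBound r (k • m) E b c j := by
  simp only [tailBound, map_crossMin (share_mono k _), sum_add_distrib, sum_share hk, sum_const,
    card_univ, Fintype.card_fin, Pi.smul_apply, smul_sum]

end TailBound

section Membership

/-- `E j` is the slack of the inequality (D1) with index `j`, for all `j ≤ r`. It is pinned by an
equation to avoid truncated subtraction, so its existence contains (D1) itself. -/
def IsSlack (r : ℕ) (m a E : ℕ → ℕ) : Prop :=
  ∀ j ≤ r, E j + ∑ l ∈ Icc 1 j, a l = ∑ l ∈ Icc 1 j, m l

variable {r : ℕ} {m a E d : ℕ → ℕ} {b : ℕ}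

lemma IsSlack.add_eq (hE : IsSlack r m a E) {j : ℕ} (hj : j < r) :
    E (j + 1) + a (j + 1) = E j + m (j + 1) := by
  have hj₀ := hE j hj.le
  have hj₁ := hE (j + 1) hj
  simp only [sum_Icc_succ_top (Nat.le_add_left 1 j)] at hj₁
  omega

lemma QD_eq_sum_add_sum (m : ℕ → ℕ) {j : ℕ} (hj : j ∈ Icc 2 (r + 1)) :
    QD (r + 2) m j = ∑ l ∈ Icc 1 r, m l + ∑ l ∈ Icc j (r + 2), m l := by
  obtain ⟨hj2, hjr⟩ := mem_Icc.1 hj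
  obtain ⟨i, rfl⟩ : ∃ i, j = i + 1 := Nat.exists_eq_add_of_le' (by omega)
  have hsplit := sum_Icc_add_sum_Icc_add_one m (show 1 ≤ i + 1 by omega) (show i ≤ r by omega)
  rw [sum_Icc_succ_top (by omega) m, sum_Icc_succ_top (by omega) m]
  simp only [QD, add_assoc, Nat.reduceAdd, Nat.add_sub_cancel, show r + 2 - 1 = r + 1 from rfl]
  omega

lemma add_tail_le_tailBound_iff (hE : IsSlack r m a E) {j : ℕ} (hj : j ∈ Icc 2 (r + 1)) :
    b + a (r + 1) + ∑ l ∈ Icc j (r + 1), d l ≤ tailBound r m E b (a (r + 1)) j ↔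
      ∑ l ∈ Icc 1 (r + 1), a l + ∑ l ∈ Icc j (r + 1), d l ≤ QD (r + 2) m j ∧
      ∑ l ∈ Icc 1 r, a l + b + ∑ l ∈ Icc j (r + 1), d l ≤ QD (r + 2) m j ∧
      ∀ k, j - 1 ≤ k → k ≤ r →
        2 * ∑ l ∈ Icc 1 k, a l + ∑ l ∈ Icc (k + 1) (r + 1), a l + b + ∑ l ∈ Icc j (r + 1), d l ≤
          QD (r + 2) m j + ∑ l ∈ Icc 1 k, m l := by
  have hEr := hE r le_rfl
  have hsucc := sum_Icc_succ_top (Nat.le_add_left 1 r) a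
  rw [tailBound, le_add_crossMin_iff, QD_eq_sum_add_sum m hj, hsucc]
  refine and_congr (by omega) (and_congr (by omega) (forall₃_congr fun k _ hkr => ?_))
  have hk := hE k hkr
  have hsplit := sum_Icc_add_sum_Icc_add_one a (show 1 ≤ k + 1 by omega) (show k ≤ r + 1 by omega)
  omega

-- (D3) and (D4) are the case `j = n - 1` missing from (D5) and (D6).
lemma mem_SD_iff_forall_QD (hr : 1 ≤ r) :
    (a, b, d) ∈ SD (r + 2) m ↔
      (∀ l ∉ Icc 1 (r + 1), a l = 0) ∧ (∀ l ∉ Icc 2 (r + 1), d l = 0) ∧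
      (∀ j ≤ r + 1, ∑ l ∈ Icc 1 j, a l ≤ ∑ l ∈ Icc 1 j, m l) ∧
      ∑ l ∈ Icc 1 r, a l + b ≤ ∑ l ∈ Icc 1 r, m l + m (r + 2) ∧
      ∀ j ∈ Icc 2 (r + 1),
        ∑ l ∈ Icc 1 (r + 1), a l + ∑ l ∈ Icc j (r + 1), d l ≤ QD (r + 2) m j ∧
        ∑ l ∈ Icc 1 r, a l + b + ∑ l ∈ Icc j (r + 1), d l ≤ QD (r + 2) m j ∧
        ∀ k, j - 1 ≤ k → k ≤ r →
          2 * ∑ l ∈ Icc 1 k, a l + ∑ l ∈ Icc (k + 1) (r + 1), a l + b +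
            ∑ l ∈ Icc j (r + 1), d l ≤ QD (r + 2) m j + ∑ l ∈ Icc 1 k, m l := by
  have hlast : QD (r + 2) m (r + 1) = ∑ l ∈ Icc 1 (r + 2), m l := by
    rw [QD_eq_sum_add_sum m (by simp [hr]), sum_Icc_add_sum_Icc_add_one m (by omega) (by omega)]
  simp only [SD, Set.mem_ofPred_eq, Nat.add_sub_cancel, show r + 2 - 1 = r + 1 from rfl]
  constructor
  · rintro ⟨ha, hd, h1, h2, h3, h4, h5, h6, h7⟩
    refine ⟨fun l hl => ha l (by simp only [mem_Icc] at hl; omega),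
      fun l hl => hd l (by simp only [mem_Icc] at hl; omega),
      fun j hj => ?_, h2, fun j hj => ?_⟩
    · rcases j.eq_zero_or_pos with rfl | hj0
      · simp
      · exact h1 j hj0 hj
    · obtain ⟨hj2, hjr⟩ := mem_Icc.1 hj
      rcases hjr.eq_or_lt with rfl | hlt
      · exact ⟨by simpa [hlast] using h3, by simpa [hlast] using h4, fun k => h7 _ k hj2 le_rfl⟩
      · have hjr' : j ≤ r := Nat.lt_succ_iff.1 hlt
        exact ⟨h5 j hj2 hjr', h6 j hj2 hjr', fun k => h7 j k hj2 hjr⟩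
  · rintro ⟨ha, hd, h1, h2, h⟩
    have htop := h (r + 1) (by simp [hr])
    simp only [Icc_self, sum_singleton, hlast] at htop
    exact ⟨fun l hl => ha l (by simp only [mem_Icc]; omega),
      fun l hl => hd l (by simp only [mem_Icc]; omega),
      fun j _ hj => h1 j hj, h2, htop.1, htop.2.1,
      fun j hj2 hjr => (h j (mem_Icc.2 ⟨hj2, by omega⟩)).1,
      fun j hj2 hjr => (h j (mem_Icc.2 ⟨hj2, by omega⟩)).2.1,
      fun j k hj2 hjr => (h j (mem_Icc.2 ⟨hj2, hjr⟩)).2.2 k⟩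

lemma mem_SD_iff (hr : 1 ≤ r) :
    (a, b, d) ∈ SD (r + 2) m ↔
      (∀ l ∉ Icc 1 (r + 1), a l = 0) ∧ (∀ l ∉ Icc 2 (r + 1), d l = 0) ∧
      ∃ E, IsSlack r m a E ∧ a (r + 1) ≤ E r + m (r + 1) ∧ b ≤ E r + m (r + 2) ∧
        ∀ j ∈ Icc 2 (r + 1),
          b + a (r + 1) + ∑ l ∈ Icc j (r + 1), d l ≤ tailBound r m E b (a (r + 1)) j := by
  have hsucc (f : ℕ → ℕ) := sum_Icc_succ_top (Nat.le_add_left 1 r) f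
  rw [mem_SD_iff_forall_QD hr]
  refine and_congr_right fun _ => and_congr_right fun _ => ⟨?_, ?_⟩
  · rintro ⟨h1, h2, h⟩
    have hE : IsSlack r m a fun j => ∑ l ∈ Icc 1 j, m l - ∑ l ∈ Icc 1 j, a l :=
      fun j hj => Nat.sub_add_cancel (h1 j (by omega))
    have hEr := hE r le_rfl
    have htop := h1 (r + 1) le_rfl
    rw [hsucc, hsucc] at htop
    exact ⟨_, hE, by omega, by omega, fun j hj => (add_tail_le_tailBound_iff hE hj).2 (h j hj)⟩
  · rintro ⟨E, hE, hc, hb, h⟩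
    have hEr := hE r le_rfl
    refine ⟨fun j hj => ?_, by omega, fun j hj => (add_tail_le_tailBound_iff hE hj).1 (h j hj)⟩
    rcases hj.eq_or_lt with rfl | hlt
    · rw [hsucc, hsucc]
      omega
    · have := hE j (by omega)
      omega

end Membership

section Addition

lemma QD_add (n : ℕ) (m m' : ℕ → ℕ) (j : ℕ) : QD n (m + m') j = QD n m j + QD n m' j := by
  simp only [QD, Pi.add_apply, sum_add_distrib]
  ring

lemma add_mem_SD {n : ℕ} {m m' : ℕ → ℕ} {x y : (ℕ → ℕ) × ℕ × (ℕ → ℕ)} (hx : x ∈ SD n m)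
    (hy : y ∈ SD n m') : x + y ∈ SD n (m + m') := by
  obtain ⟨ha, hd, h1, h2, h3, h4, h5, h6, h7⟩ := hx
  obtain ⟨ha', hd', h1', h2', h3', h4', h5', h6', h7'⟩ := hy
  simp only [SD, Set.mem_ofPred_eq, Prod.fst_add, Prod.snd_add, Pi.add_apply, sum_add_distrib,
    QD_add]
  refine ⟨fun l hl => by rw [ha l hl, ha' l hl], fun l hl => by rw [hd l hl, hd' l hl],
    fun j hj hjn => add_le_add (h1 j hj hjn) (h1' j hj hjn), by omega, by omega, by omega,
    fun j hj hjn => ?_, fun j hj hjn => ?_, fun j k hj hjn hk hkn => ?_⟩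
  · linarith [h5 j hj hjn, h5' j hj hjn]
  · linarith [h6 j hj hjn, h6' j hj hjn]
  · linarith [h7 j k hj hjn hk hkn, h7' j k hj hjn hk hkn]

/-- The semigroup of pairs `(m, x)` with `x ∈ S_D(m)`. -/
def sdSemigroup (n : ℕ) : AddSubmonoid ((ℕ → ℕ) × (ℕ → ℕ) × ℕ × (ℕ → ℕ)) where
  carrier := {p | p.2 ∈ SD n p.1}
  zero_mem' := by simp [SD]
  add_mem' := add_mem_SD

lemma sum_mem_SD {ι : Type*} {s : Finset ι} {n : ℕ} {m : ι → ℕ → ℕ}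
    {x : ι → (ℕ → ℕ) × ℕ × (ℕ → ℕ)} (hx : ∀ i ∈ s, x i ∈ SD n (m i)) :
    ∑ i ∈ s, x i ∈ SD n (∑ i ∈ s, m i) := by
  have hsum : ∑ i ∈ s, (m i, x i) ∈ sdSemigroup n := sum_mem hx
  rwa [← prod_mk_sum] at hsum

end Addition

section Decomposition

variable {r k : ℕ} {m a E d : ℕ → ℕ} {b : ℕ}

lemma exists_sum_eq_isSlack_share (hk : 0 < k) (hE : IsSlack r (k • m) a E) :
    ∃ x : Fin k → ℕ → ℕ, ∑ t, x t = a ∧ ∀ t : Fin k,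
      IsSlack r m (x t) (fun j => share k t (E j)) ∧ x t (r + 1) = share k t (a (r + 1)) := by
  let x (t : Fin k) (l : ℕ) : ℕ :=
    if l ∈ Icc 1 r then m l + share k t (E (l - 1)) - share k t (E l) else share k t (a l)
  have hEstep : ∀ j < r, E (j + 1) + a (j + 1) = E j + k * m (j + 1) := fun j hj => hE.add_eq hj
  have hxstep : ∀ t, ∀ j < r,
      x t (j + 1) + share k t (E (j + 1)) = m (j + 1) + share k t (E j) := by
    intro t j hj
    have hle := share_le_share_add (e := E (j + 1)) (e' := E j) (p := m (j + 1)) hk t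
      (by have := hEstep j hj; omega)
    rw [show x t (j + 1) = _ from if_pos (mem_Icc.2 ⟨j.succ_pos, hj⟩), Nat.add_sub_cancel]
    omega
  refine ⟨x, funext fun l => ?_, fun t => ⟨fun j => ?_, if_neg (by simp)⟩⟩
  · rw [Finset.sum_apply]
    by_cases hl : l ∈ Icc 1 r
    · obtain ⟨hl1, hlr⟩ := mem_Icc.1 hl
      obtain ⟨j, rfl⟩ : ∃ j, l = j + 1 := Nat.exists_eq_add_of_le' hl1
      have hsum := Fintype.sum_congr _ _ fun t => hxstep t j hlr
      simp only [sum_add_distrib, sum_share hk, sum_const, card_univ, Fintype.card_fin,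
        smul_eq_mul] at hsum
      have := hEstep j hlr
      omega
    · simp only [x, if_neg hl, sum_share hk]
  · induction j with
    | zero =>
      have hE0 : E 0 = 0 := by simpa using hE 0 r.zero_le
      simp [hE0, share_zero t.isLt]
    | succ j ih =>
      intro hj
      have hj₀ := ih (by omega)
      have hj₁ := hxstep t j hj
      simp only [sum_Icc_succ_top (Nat.le_add_left 1 j)] at hj₀ ⊢
      omega

lemma exists_sum_eq_of_mem_SD_smul (hr : 1 ≤ r) (hk : 0 < k)
    {z : (ℕ → ℕ) × ℕ × (ℕ → ℕ)} (hz : z ∈ SD (r + 2) (k • m)) :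
    ∃ x : Fin k → (ℕ → ℕ) × ℕ × (ℕ → ℕ), (∀ t, x t ∈ SD (r + 2) m) ∧ z = ∑ t, x t := by
  obtain ⟨a, b, d⟩ := z
  obtain ⟨ha, hd, E, hE, hc, hb, hbound⟩ := (mem_SD_iff hr).1 hz
  obtain ⟨x, rfl, hx⟩ := exists_sum_eq_isSlack_share hk hE
  set c := (∑ t, x t) (r + 1)
  have hcE (t : Fin k) : share k t c ≤ share k t (E r) + m (r + 1) := share_le_share_add hk t hc
  have hbE (t : Fin k) : share k t b ≤ share k t (E r) + m (r + 2) := share_le_share_add hk t hb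
  have hstep (t : Fin k) (j : ℕ) (hj : j < r) :
      share k t (E (j + 1)) ≤ share k t (E j) + m (j + 1) :=
    (hx t).1.add_eq hj ▸ Nat.le_add_right _ _
  obtain ⟨y, hyd, hy0, hy⟩ := exists_sum_eq_forall_tail_le d
    (load := fun t : Fin k => share k t b + share k t c)
    (cap := fun t : Fin k => tailBound r m (fun j => share k t (E j)) (share k t b) (share k t c))
    (show 2 ≤ r + 1 + 1 by omega) (fun t => antitoneOn_tailBound (hstep t))
    (fun t j hj => add_le_tailBound (hstep t) (hcE t) (hbE t) hj)
    (by simpa only [sum_add_distrib, sum_share hk, sum_tailBound_share hk] using hbound)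
  refine ⟨fun t => (x t, share k t b, y t), fun t => (mem_SD_iff hr).2
    ⟨fun l hl => ?_, hy0 t, _, (hx t).1, (hx t).2 ▸ hcE t, hbE t, (hx t).2 ▸ hy t⟩, ?_⟩
  · have hsum : ∑ t, x t l = 0 := by rw [← Finset.sum_apply, ha l hl]
    exact sum_eq_zero_iff.1 hsum t (mem_univ t)
  · have hyd' : ∑ t, y t = d := funext fun l => by
      rw [Finset.sum_apply]
      by_cases hl : l ∈ Icc 2 (r + 1)
      · exact hyd l hl
      · rw [hd l hl, sum_eq_zero fun t _ => hy0 t l hl]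
    rw [← prod_mk_sum, ← prod_mk_sum, sum_share hk, hyd']

end Decomposition

/-- Normality of the polytope in type `D`: `S_D(k·m)` is the `k`-fold Minkowski sum of
`S_D(m)` with itself. -/
theorem SD_normal (n k : ℕ) (hn : 4 ≤ n) (hk : 1 ≤ k) (m : ℕ → ℕ)
    (z : (ℕ → ℕ) × ℕ × (ℕ → ℕ)) :
    z ∈ SD n (k • m) ↔
      ∃ x : Fin k → (ℕ → ℕ) × ℕ × (ℕ → ℕ), (∀ t, x t ∈ SD n m) ∧ z = ∑ t, x t := by
  obtain ⟨r, rfl⟩ : ∃ r, n = r + 2 := Nat.exists_eq_add_of_le' (by omega)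
  refine ⟨exists_sum_eq_of_mem_SD_smul (by omega) hk, ?_⟩
  rintro ⟨x, hx, rfl⟩
  simpa using sum_mem_SD (s := univ) fun t _ => hx t
end

section
/- Let 1 ≤ i ≤ n and let e_i ∈ ℕ^n be the i-th standard unit vector. Denote by u(l) the tuple in ℕ^{2n−1} with a 1 in coordinate c_l and 0 elsewhere. Then all of the following belong to S_C(e_i): u(j) for all i ≤ j ≤ n; u(2n−j) for all 1 ≤ j ≤ n−1 (these are the coordinates of the barred roots α_{1,j̄}); u(j) + u(2n−j') for all i ≤ j ≤ n and all 2 ≤ j' ≤ i; and u(2n−j) + u(2n−j') for all 2 ≤ j ≤ j' ≤ i. (This is the paper's Lemma on the fundamental sets S_w(ω_i) in type C.) -/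
open Finset
open scoped Pointwise

/-- The `i`-th standard unit vector (1-based coordinates, as a function `ℕ → ℕ`). -/
def unitVec (i : ℕ) : ℕ → ℕ := fun l => if l = i then 1 else 0

/-- The lattice-point set `S_C(m)` of the polytope `P_w(λ)` in type `C_n`, where
`w = s_1 ⋯ s_{n-1} s_n s_{n-1} ⋯ s_1` and `λ = m_1 ω_1 + ⋯ + m_n ω_n`.
A point is a 1-based tuple `c_1, …, c_{2n-1}` of nonnegative integers (all other
coordinates vanish), subject to the Dyck-path inequalities (C1)–(C2), the degree-path
inequalities (C3) and the inequalities (C4) from paths with coefficients. -/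
def SC (n : ℕ) (m : ℕ → ℕ) : Set (ℕ → ℕ) :=
  {c | (∀ l, (l = 0 ∨ 2 * n - 1 < l) → c l = 0) ∧
    (∀ j, 1 ≤ j → j < n →
      ∑ l ∈ Icc 1 j, c l ≤ ∑ l ∈ Icc 1 j, m l) ∧
    ((∑ l ∈ Icc 1 (n - 1), c l) + c (2 * n - 1) ≤ ∑ l ∈ Icc 1 n, m l) ∧
    (∀ j, 2 ≤ j → j ≤ n →
      (∑ l ∈ Icc 1 (2 * n - j), c l) + c (2 * n - 1) ≤
        (∑ l ∈ Icc 1 (j - 1), m l) + 2 * ∑ l ∈ Icc j n, m l) ∧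
    (∀ j k, 2 ≤ j → j ≤ n → j - 1 ≤ k → k < n →
      2 * (∑ l ∈ Icc 1 k, c l) + (∑ l ∈ Icc (k + 1) (2 * n - j), c l) + 2 * c (2 * n - 1) ≤
        (∑ l ∈ Icc 1 (j - 1), m l) + 2 * (∑ l ∈ Icc j n, m l) + ∑ l ∈ Icc 1 k, m l)}

/- When the last coordinate `c_{2n-1}` vanishes, (C4) is the sum of (C3) for `j` and (C1) for `k`,
and (C2) is weaker than (C1) for `n - 1`. In particular a vector supported on `[i, 2n-2]` lies in
`S_C(e_i)` as soon as its total is at most `2` and its total over the coordinates before `2n-i` is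
at most `1`. This settles every point in question except `u(2n-1)`, for which all sums on the left
vanish and (C2)–(C4) bound only the last coordinate. -/

theorem sum_Icc_unitVec (a b i : ℕ) :
    ∑ l ∈ Icc a b, unitVec i l = if a ≤ i ∧ i ≤ b then 1 else 0 := by
  simp [unitVec]

theorem sum_Icc_unitVec_le_one (a b i : ℕ) : ∑ l ∈ Icc a b, unitVec i l ≤ 1 := by
  rw [sum_Icc_unitVec]
  split_ifs <;> simp

theorem sum_Icc_consecutive {M : Type*} [AddCommMonoid M] (f : ℕ → M) {a b c : ℕ}
    (hab : a ≤ b + 1) (hbc : b ≤ c) :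
    ∑ l ∈ Icc a b, f l + ∑ l ∈ Icc (b + 1) c, f l = ∑ l ∈ Icc a c, f l := by
  simpa only [Ico_add_one_right_eq_Icc] using
    sum_Ico_consecutive f hab (Nat.add_le_add_right hbc 1)

theorem mem_SC_of_last_eq_zero {n : ℕ} {m c : ℕ → ℕ} (hn : 0 < n)
    (hc : ∀ l, l = 0 ∨ 2 * n - 1 ≤ l → c l = 0)
    (dyck : ∀ j < n, ∑ l ∈ Icc 1 j, c l ≤ ∑ l ∈ Icc 1 j, m l)
    (degree : ∀ j, 2 ≤ j → j ≤ n →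
      ∑ l ∈ Icc 1 (2 * n - j), c l ≤ (∑ l ∈ Icc 1 (j - 1), m l) + 2 * ∑ l ∈ Icc j n, m l) :
    c ∈ SC n m := by
  have last : c (2 * n - 1) = 0 := hc _ (.inr le_rfl)
  refine ⟨fun l hl => hc l (hl.imp_right le_of_lt), fun j _ hj => dyck j hj, ?_, ?_, ?_⟩
  · calc
      (∑ l ∈ Icc 1 (n - 1), c l) + c (2 * n - 1) = ∑ l ∈ Icc 1 (n - 1), c l := by
        rw [last, add_zero]
      _ ≤ ∑ l ∈ Icc 1 (n - 1), m l := dyck _ (Nat.sub_one_lt_of_lt hn)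
      _ ≤ ∑ l ∈ Icc 1 n, m l :=
        sum_le_sum_of_subset (Icc_subset_Icc_right (Nat.sub_le n 1))
  · simpa only [last, add_zero] using degree
  · intro j k hj hjn _ hkn
    have split := sum_Icc_consecutive c (Nat.le_add_left 1 k) (show k ≤ 2 * n - j by omega)
    linarith [degree j hj hjn, dyck k hkn]

theorem unitVec_last_mem_SC {n : ℕ} {m : ℕ → ℕ} (hm : 0 < ∑ l ∈ Icc 1 n, m l) :
    unitVec (2 * n - 1) ∈ SC n m := by
  have hn : n ≠ 0 := by
    rintro rfl
    simp at hm
  have last : unitVec (2 * n - 1) (2 * n - 1) = 1 := if_pos rfl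
  have sum_eq_zero (a : ℕ) {b : ℕ} (hb : b < 2 * n - 1) :
      ∑ l ∈ Icc a b, unitVec (2 * n - 1) l = 0 := by
    rw [sum_Icc_unitVec, if_neg (by omega)]
  have split_m {j : ℕ} (hj : 2 ≤ j) (hjn : j ≤ n) :
      ∑ l ∈ Icc 1 (j - 1), m l + ∑ l ∈ Icc j n, m l = ∑ l ∈ Icc 1 n, m l := by
    simpa only [Nat.sub_add_cancel (one_le_two.trans hj)] using
      sum_Icc_consecutive m (Nat.le_add_left 1 (j - 1)) ((Nat.sub_le j 1).trans hjn)
  refine ⟨fun l hl => if_neg (by omega), fun j _ hj => ?_, ?_, fun j hj hjn => ?_,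
    fun j k hj hjn hjk hkn => ?_⟩
  · rw [sum_eq_zero 1 (by omega)]
    exact Nat.zero_le _
  · rw [sum_eq_zero 1 (by omega), last]
    omega
  · rw [sum_eq_zero 1 (by omega), last]
    have := split_m hj hjn
    omega
  · rw [sum_eq_zero 1 (by omega), sum_eq_zero (k + 1) (by omega), last]
    have := split_m hj hjn
    have : ∑ l ∈ Icc 1 (j - 1), m l ≤ ∑ l ∈ Icc 1 k, m l :=
      sum_le_sum_of_subset (Icc_subset_Icc_right hjk)
    omega

theorem mem_SC_unitVec_of_sum_le {n i : ℕ} {c : ℕ → ℕ} (hi : 1 ≤ i) (hin : i ≤ n)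
    (hc : ∀ l, l < i ∨ 2 * n - 1 ≤ l → c l = 0)
    (initial : ∑ l ∈ Icc 1 (2 * n - i - 1), c l ≤ 1)
    (total : ∑ l ∈ Icc 1 (2 * n - 2), c l ≤ 2) :
    c ∈ SC n (unitVec i) := by
  have sum_mono {a b : ℕ} (hab : a ≤ b) : ∑ l ∈ Icc 1 a, c l ≤ ∑ l ∈ Icc 1 b, c l :=
    sum_le_sum_of_subset (Icc_subset_Icc_right hab)
  refine mem_SC_of_last_eq_zero (by omega) (fun l hl => hc l (by omega))
    (fun j hj => ?_) fun j hj hjn => ?_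
  · rcases lt_or_ge j i with hji | hij
    · rw [sum_eq_zero fun l hl => hc l (.inl ((mem_Icc.mp hl).2.trans_lt hji))]
      exact Nat.zero_le _
    · rw [sum_Icc_unitVec, if_pos ⟨hi, hij⟩]
      exact (sum_mono (by omega)).trans initial
  · simp only [sum_Icc_unitVec]
    rcases lt_or_ge i j with hij | hji
    · rw [if_pos (by omega), if_neg (by omega)]
      exact (sum_mono (by omega)).trans initial
    · rw [if_neg (by omega), if_pos (by omega)]
      exact (sum_mono (by omega)).trans total

theorem unitVec_mem_SC_unitVec {n i l : ℕ} (hi : 1 ≤ i) (hin : i ≤ n) (hil : i ≤ l)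
    (hl : l < 2 * n) : unitVec l ∈ SC n (unitVec i) := by
  obtain rfl | hl := (Nat.le_sub_one_of_lt hl).eq_or_lt
  · exact unitVec_last_mem_SC (by rw [sum_Icc_unitVec, if_pos ⟨hi, hin⟩]; exact one_pos)
  · exact mem_SC_unitVec_of_sum_le hi hin (fun _ _ => if_neg (by omega))
      (sum_Icc_unitVec_le_one ..) ((sum_Icc_unitVec_le_one ..).trans one_le_two)

theorem unitVec_add_unitVec_mem_SC_unitVec {n i l l' : ℕ} (hin : i ≤ n)
    (hil : i ≤ l) (hl : l < 2 * n - 1) (hil' : 2 * n - i ≤ l') (hl' : l' < 2 * n - 1) :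
    unitVec l + unitVec l' ∈ SC n (unitVec i) := by
  refine mem_SC_unitVec_of_sum_le (by omega) hin (fun k hk => ?_) ?_ ?_
  · simp only [Pi.add_apply, unitVec]
    rw [if_neg (by omega), if_neg (by omega)]
  · have outside : ∑ k ∈ Icc 1 (2 * n - i - 1), unitVec l' k = 0 := by
      rw [sum_Icc_unitVec, if_neg (by omega)]
    simp only [Pi.add_apply, sum_add_distrib, outside, add_zero, sum_Icc_unitVec_le_one]
  · simp only [Pi.add_apply, sum_add_distrib]
    exact add_le_add (sum_Icc_unitVec_le_one ..) (sum_Icc_unitVec_le_one ..)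

/-- Points of the fundamental set `S_C(e_i)` in type `C`: the unit vectors `u(j)` for
`i ≤ j ≤ n`, the unit vectors `u(2n-j)` (barred coordinates) for `1 ≤ j ≤ n-1`, and the
sums `u(j) + u(2n-j')` for `i ≤ j ≤ n`, `2 ≤ j' ≤ i`, and `u(2n-j) + u(2n-j')` for
`2 ≤ j ≤ j' ≤ i`. -/
theorem SC_fundamental_points (n i : ℕ) (hn : 2 ≤ n) (hi1 : 1 ≤ i) (hin : i ≤ n) :
    (∀ j, i ≤ j → j ≤ n → unitVec j ∈ SC n (unitVec i)) ∧
    (∀ j, 1 ≤ j → j < n → unitVec (2 * n - j) ∈ SC n (unitVec i)) ∧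
    (∀ j j', i ≤ j → j ≤ n → 2 ≤ j' → j' ≤ i →
      unitVec j + unitVec (2 * n - j') ∈ SC n (unitVec i)) ∧
    (∀ j j', 2 ≤ j → j ≤ j' → j' ≤ i →
      unitVec (2 * n - j) + unitVec (2 * n - j') ∈ SC n (unitVec i)) := by
  refine ⟨fun j hij hjn => ?_, fun j hj hjn => ?_, fun j j' hij hjn hj' hj'i => ?_,
    fun j j' hj hjj' hj'i => ?_⟩
  · exact unitVec_mem_SC_unitVec hi1 hin hij (by omega)
  · exact unitVec_mem_SC_unitVec hi1 hin (by omega) (by omega)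
  · exact unitVec_add_unitVec_mem_SC_unitVec hin hij (by omega) (by omega) (by omega)
  · exact unitVec_add_unitVec_mem_SC_unitVec hin (by omega) (by omega) (by omega) (by omega)
end

section
/- For all m, m' ∈ ℕ^n one has the Minkowski sum identity S'_C(m + m') = S'_C(m) + S'_C(m'): every element of S'_C(m + m') can be written as x + y with x ∈ S'_C(m) and y ∈ S'_C(m'), and conversely every such sum lies in S'_C(m + m'). (This is the paper's assertion that the polytope defined by the Dyck-path and degree-path inequalities alone, omitting the inequalities with coefficients, still has the Minkowski property, in type C.) -/
open Finset
open scoped Pointwise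

/-- The lattice-point set `S'_C(m)` given by only the Dyck-path inequalities (C1)–(C2)
and the degree-path inequalities (C3) in type `C_n` (the inequalities from paths with
coefficients are omitted). -/
def SC' (n : ℕ) (m : ℕ → ℕ) : Set (ℕ → ℕ) :=
  {c | (∀ l, (l = 0 ∨ 2 * n - 1 < l) → c l = 0) ∧
    (∀ j, 1 ≤ j → j < n →
      ∑ l ∈ Icc 1 j, c l ≤ ∑ l ∈ Icc 1 j, m l) ∧
    ((∑ l ∈ Icc 1 (n - 1), c l) + c (2 * n - 1) ≤ ∑ l ∈ Icc 1 n, m l) ∧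
    (∀ j, 2 ≤ j → j ≤ n →
      (∑ l ∈ Icc 1 (2 * n - j), c l) + c (2 * n - 1) ≤
        (∑ l ∈ Icc 1 (j - 1), m l) + 2 * ∑ l ∈ Icc j n, m l)}

/-!
Order the coordinates as `c_1, …, c_{n-1}, c_{2n-1}, c_n, …, c_{2n-2}`. Then the inequalities
(C1)–(C3) bound exactly the initial partial sums, by bounds that increase along the order and are
additive in `m`. For bounds of this kind the Minkowski property is proved greedily: when a new last
coordinate is split as `u + v`, every earlier inequality is unaffected, and the slacks left in the
two summands together are at least the new coordinate.
-/

theorem exists_le_exists_le_add_eq_of_le_add {M : Type*} [AddCommMonoid M] [LinearOrder M]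
    [CanonicallyOrderedAdd M] [AddLeftReflectLE M] {a t t' : M} (h : a ≤ t + t') :
    ∃ u ≤ t, ∃ v ≤ t', u + v = a := by
  rcases le_total a t with hat | hta
  · exact ⟨a, hat, 0, zero_le, add_zero a⟩
  · obtain ⟨v, rfl⟩ := exists_add_of_le hta
    exact ⟨t, le_rfl, v, le_of_add_le_add_left h, rfl⟩

section SublevelPolytope

variable {ι α M : Type*} [AddCommMonoid M] [LinearOrder α] [PartialOrder M] {s : Finset ι}
  {r : ι → α} {b b' : α → M}

/-- The vectors supported on `s` whose sum over each sublevel set `{i ∈ s | r i ≤ k}` is at most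
`b k`. For canonically ordered `M`, such as `ℕ`, these are the nonnegative points of a polytope
whose defining inequalities run over a chain of sets of coordinates. -/
def sublevelPolytope (s : Finset ι) (r : ι → α) (b : α → M) : Set (ι → M) :=
  {c | (∀ i ∉ s, c i = 0) ∧ ∀ k, ∑ i ∈ s with r i ≤ k, c i ≤ b k}

theorem sublevelPolytope_add_subset [IsOrderedAddMonoid M] :
    sublevelPolytope s r b + sublevelPolytope s r b' ⊆ sublevelPolytope s r (b + b') := by
  rintro _ ⟨x, ⟨hx₀, hx⟩, y, ⟨hy₀, hy⟩, rfl⟩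
  refine ⟨fun i hi => by simp [hx₀ i hi, hy₀ i hi], fun k => ?_⟩
  simpa only [Pi.add_apply, sum_add_distrib] using add_le_add (hx k) (hy k)

theorem update_mem_sublevelPolytope_insert [DecidableEq ι] (hb : Monotone b) {x : ι → M}
    (hx : x ∈ sublevelPolytope s r b) {e : ι} (he : e ∉ s) (hmax : ∀ i ∈ s, r i ≤ r e) {u : M}
    (hu : u + ∑ i ∈ s, x i ≤ b (r e)) :
    Function.update x e u ∈ sublevelPolytope (insert e s) r b := by
  refine ⟨fun i hi => ?_, fun k => ?_⟩
  · rw [mem_insert, not_or] at hi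
    rw [Function.update_of_ne hi.1, hx.1 i hi.2]
  · have he' : e ∉ s.filter (r · ≤ k) := fun h => he (mem_filter.mp h).1
    rw [filter_insert]
    split_ifs with hk
    · rw [sum_insert he', sum_update_of_notMem he', Function.update_self,
        filter_true_of_mem fun i hi => (hmax i hi).trans hk]
      exact hu.trans (hb hk)
    · rw [sum_update_of_notMem he']
      exact hx.2 k

theorem mem_sublevelPolytope_iff_forall_mem [CanonicallyOrderedAdd M] (hb : Monotone b)
    {c : ι → M} :
    c ∈ sublevelPolytope s r b ↔
      (∀ i ∉ s, c i = 0) ∧ ∀ i ∈ s, ∑ j ∈ s with r j ≤ r i, c j ≤ b (r i) := by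
  refine ⟨fun h => ⟨h.1, fun i _ => h.2 (r i)⟩, fun h => ⟨h.1, fun k => ?_⟩⟩
  rcases (s.filter (r · ≤ k)).eq_empty_or_nonempty with hk | hk
  · simp [hk]
  · obtain ⟨i, hi, hmax⟩ := exists_max_image _ r hk
    rw [mem_filter] at hi
    have hfilter : s.filter (r · ≤ k) = s.filter (r · ≤ r i) :=
      filter_congr fun j hj => ⟨fun hjk => hmax j (mem_filter.mpr ⟨hj, hjk⟩), hi.2.trans'⟩
    exact hfilter ▸ (h.2 i hi.1).trans (hb hi.2)

theorem update_zero_mem_sublevelPolytope [CanonicallyOrderedAdd M] [DecidableEq ι]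
    {c : ι → M} {e : ι} (he : e ∉ s) (hc : c ∈ sublevelPolytope (insert e s) r b) :
    Function.update c e 0 ∈ sublevelPolytope s r b := by
  refine ⟨fun i hi => ?_, fun k => ?_⟩
  · rcases eq_or_ne i e with rfl | hie
    · exact Function.update_self ..
    · rw [Function.update_of_ne hie, hc.1 i (by simp [hie, hi])]
  · rw [sum_update_of_notMem fun h => he (mem_filter.mp h).1]
    exact (sum_le_sum_of_subset (filter_subset_filter _ (subset_insert e s))).trans (hc.2 k)

end SublevelPolytope

theorem sublevelPolytope_add {ι α M : Type*} [AddCommMonoid M] [LinearOrder α] [LinearOrder M]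
    [CanonicallyOrderedAdd M] [IsOrderedCancelAddMonoid M] {s : Finset ι} {r : ι → α}
    {b b' : α → M} (hb : Monotone b) (hb' : Monotone b') :
    sublevelPolytope s r (b + b') = sublevelPolytope s r b + sublevelPolytope s r b' := by
  classical
  refine Set.Subset.antisymm ?_ sublevelPolytope_add_subset
  induction s using Finset.induction_on_max_value r with
  | empty => exact fun c hc => ⟨0, by simp [sublevelPolytope], 0, by simp [sublevelPolytope],
      funext fun i => by simp [hc.1 i]⟩
  | insert e s he hmax ih =>
    intro c hc
    obtain ⟨x, hx, y, hy, hxy : x + y = Function.update c e 0⟩ :=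
      ih (update_zero_mem_sublevelPolytope he hc)
    have hfilter : s.filter (r · ≤ r e) = s := filter_true_of_mem hmax
    obtain ⟨t, ht⟩ := exists_add_of_le (hfilter ▸ hx.2 (r e))
    obtain ⟨t', ht'⟩ := exists_add_of_le (hfilter ▸ hy.2 (r e))
    have hsum : ∑ i ∈ s, c i = ∑ i ∈ s, x i + ∑ i ∈ s, y i := by
      rw [← sum_update_of_notMem he c 0, ← hxy]
      exact sum_add_distrib
    have hslack : c e ≤ t + t' := by
      have hce := hc.2 (r e)
      rw [filter_true_of_mem (by simpa using hmax), sum_insert he, Pi.add_apply, ht, ht',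
        add_add_add_comm, hsum, add_comm] at hce
      exact le_of_add_le_add_left hce
    obtain ⟨u, hu, v, hv, huv⟩ := exists_le_exists_le_add_eq_of_le_add hslack
    refine ⟨_, update_mem_sublevelPolytope_insert hb hx he hmax (u := u) ?_,
      _, update_mem_sublevelPolytope_insert hb' hy he hmax (u := v) ?_, ?_⟩
    · rw [ht, add_comm]
      gcongr
    · rw [ht', add_comm]
      gcongr
    · change Function.update x e u + Function.update y e v = c
      rw [← Function.update_add, hxy, huv, Function.update_idem, Function.update_eq_self]

namespace SC'

variable {n k : ℕ}

/-- The position of the coordinate `l` in the order `1, …, n - 1, 2n - 1, n, …, 2n - 2`. -/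
def rank (n l : ℕ) : ℕ :=
  if l < n then l else if l = 2 * n - 1 then n else l + 1

theorem rank_of_lt {l : ℕ} (hl : l < n) : rank n l = l :=
  if_pos hl

theorem rank_two_mul_sub_one (hn : 0 < n) : rank n (2 * n - 1) = n := by
  rw [rank, if_neg (by omega), if_pos rfl]

theorem rank_two_mul_sub {j : ℕ} (hj : 2 ≤ j) (hjn : j ≤ n) :
    rank n (2 * n - j) = 2 * n - j + 1 := by
  rw [rank, if_neg (by omega), if_neg (by omega)]

/-- The common right-hand side of (C1)–(C3): the inequality (C1) for `j` has position `k = j`, the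
inequality (C2) has `k = n`, and (C3) for `j` has `k = 2n + 1 - j`. The second sum is empty for
`k ≤ n`. -/
def bound (n : ℕ) (m : ℕ → ℕ) (k : ℕ) : ℕ :=
  ∑ l ∈ Icc 1 (min k n), m l + ∑ l ∈ Icc (2 * n + 1 - k) n, m l

theorem bound_monotone (n : ℕ) (m : ℕ → ℕ) : Monotone (bound n m) := by
  intro k k' hk
  unfold bound
  gcongr

theorem bound_add (n : ℕ) (m m' : ℕ → ℕ) : bound n (m + m') = bound n m + bound n m' := by
  funext k
  simp only [bound, Pi.add_apply, sum_add_distrib, add_add_add_comm]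

theorem bound_of_le (m : ℕ → ℕ) (hk : k ≤ n) : bound n m k = ∑ l ∈ Icc 1 k, m l := by
  have hempty : Icc (2 * n + 1 - k) n = ∅ := Icc_eq_empty (by omega)
  rw [bound, min_eq_left hk, hempty, sum_empty, add_zero]

theorem bound_two_mul_sub_add_one (m : ℕ → ℕ) {j : ℕ} (hj : 1 ≤ j) (hjn : j ≤ n) :
    bound n m (2 * n - j + 1) = ∑ l ∈ Icc 1 (j - 1), m l + 2 * ∑ l ∈ Icc j n, m l := by
  have hsplit : ∑ l ∈ Icc 1 n, m l = ∑ l ∈ Icc 1 (j - 1), m l + ∑ l ∈ Icc j n, m l := by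
    simp only [← Ico_add_one_right_eq_Icc, Nat.sub_add_cancel hj]
    exact (sum_Ico_consecutive m hj (by omega)).symm
  rw [bound, min_eq_right (by omega), hsplit,
    show 2 * n + 1 - (2 * n - j + 1) = j by omega, add_assoc, two_mul]

theorem sum_rank_le_of_lt (c : ℕ → ℕ) (hk : k < n) :
    ∑ l ∈ Icc 1 (2 * n - 1) with rank n l ≤ k, c l = ∑ l ∈ Icc 1 k, c l := by
  congr 1
  ext l
  rw [mem_filter, mem_Icc, mem_Icc, rank]
  split_ifs <;> omega

theorem sum_rank_le_of_le (c : ℕ → ℕ) (hnk : n ≤ k) (hk : k < 2 * n) :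
    ∑ l ∈ Icc 1 (2 * n - 1) with rank n l ≤ k, c l =
      ∑ l ∈ Icc 1 (k - 1), c l + c (2 * n - 1) := by
  have hfilter : {l ∈ Icc 1 (2 * n - 1) | rank n l ≤ k} =
      insert (2 * n - 1) (Icc 1 (k - 1)) := by
    ext l
    rw [mem_filter, mem_insert, mem_Icc, mem_Icc, rank]
    split_ifs <;> omega
  rw [hfilter, sum_insert (by rw [mem_Icc]; omega), add_comm]

theorem sum_rank_le_bound_iff_of_lt (m c : ℕ → ℕ) (hk : k < n) :
    ∑ l ∈ Icc 1 (2 * n - 1) with rank n l ≤ k, c l ≤ bound n m k ↔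
      ∑ l ∈ Icc 1 k, c l ≤ ∑ l ∈ Icc 1 k, m l := by
  rw [sum_rank_le_of_lt c hk, bound_of_le m hk.le]

theorem sum_rank_le_self_bound_iff (m c : ℕ → ℕ) (hn : 0 < n) :
    ∑ l ∈ Icc 1 (2 * n - 1) with rank n l ≤ n, c l ≤ bound n m n ↔
      ∑ l ∈ Icc 1 (n - 1), c l + c (2 * n - 1) ≤ ∑ l ∈ Icc 1 n, m l := by
  rw [sum_rank_le_of_le c le_rfl (by omega), bound_of_le m le_rfl]

theorem sum_rank_le_bound_two_mul_sub_iff (m c : ℕ → ℕ) {j : ℕ} (hj : 2 ≤ j) (hjn : j ≤ n) :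
    ∑ l ∈ Icc 1 (2 * n - 1) with rank n l ≤ 2 * n - j + 1, c l ≤ bound n m (2 * n - j + 1) ↔
      ∑ l ∈ Icc 1 (2 * n - j), c l + c (2 * n - 1) ≤
        ∑ l ∈ Icc 1 (j - 1), m l + 2 * ∑ l ∈ Icc j n, m l := by
  rw [sum_rank_le_of_le c (by omega) (by omega), bound_two_mul_sub_add_one m (by omega) hjn,
    Nat.add_sub_cancel]

theorem eq_sublevelPolytope (hn : 0 < n) (m : ℕ → ℕ) :
    SC' n m = sublevelPolytope (Icc 1 (2 * n - 1)) (rank n) (bound n m) := by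
  ext c
  constructor
  · rintro ⟨hsupport, hdyck, hdyck_last, hdegree⟩
    refine (mem_sublevelPolytope_iff_forall_mem (bound_monotone n m)).mpr
      ⟨fun l hl => hsupport l (by rw [mem_Icc] at hl; omega), fun l hl => ?_⟩
    rw [mem_Icc] at hl
    rcases lt_or_ge l n with hln | hnl
    · rw [rank_of_lt hln]
      exact (sum_rank_le_bound_iff_of_lt m c hln).mpr (hdyck l hl.1 hln)
    obtain rfl | hlast := eq_or_ne l (2 * n - 1)
    · rw [rank_two_mul_sub_one hn]
      exact (sum_rank_le_self_bound_iff m c hn).mpr hdyck_last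
    · obtain ⟨j, hj, hjn, rfl⟩ : ∃ j, 2 ≤ j ∧ j ≤ n ∧ l = 2 * n - j :=
        ⟨2 * n - l, by omega, by omega, by omega⟩
      rw [rank_two_mul_sub hj hjn]
      exact (sum_rank_le_bound_two_mul_sub_iff m c hj hjn).mpr (hdegree j hj hjn)
  · rintro ⟨hsupport, hbound⟩
    exact ⟨fun l hl => hsupport l (by rw [mem_Icc]; omega),
      fun j _ hjn => (sum_rank_le_bound_iff_of_lt m c hjn).mp (hbound j),
      (sum_rank_le_self_bound_iff m c hn).mp (hbound n),
      fun j hj hjn => (sum_rank_le_bound_two_mul_sub_iff m c hj hjn).mp (hbound (2 * n - j + 1))⟩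

end SC'

/-- Minkowski sum property `S'_C(m + m') = S'_C(m) + S'_C(m')` for the polytope defined by
the Dyck-path and degree-path inequalities alone in type `C`. -/
theorem SC'_add_eq_minkowski (n : ℕ) (hn : 2 ≤ n) (m m' : ℕ → ℕ) :
    SC' n (m + m') = SC' n m + SC' n m' := by
  have hn₀ : 0 < n := by omega
  simp only [SC'.eq_sublevelPolytope hn₀, SC'.bound_add]
  exact sublevelPolytope_add (SC'.bound_monotone n m) (SC'.bound_monotone n m')
end
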